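/- (Classical terminating transformation (bi) from the paper.) Let a, b, d, c_1,...,c_r be complex numbers and m_1,...,m_r nonnegative integers with |m| = ∑m_i, Re(d-a-b-|m|) > 0, and no denominators vanishing. Then ∑_{k=0}^∞ (a)_k (b)_k ∏_{i=1}^r (c_i+m_i)_k / (k! (d)_k ∏_{i=1}^r (c_i)_k) = (-1)^{|m|} [Γ(d)Γ(d-a-b-|m|)/(Γ(d-a)Γ(d-b))] ∏_{i=1}^r (1+c_i-d)_{m_i} × ∑_{x_1=0}^{m_1}⋯∑_{x_r=0}^{m_r} [ (Δ(c+x)/Δ(c)) ∏_{i=1}^r (c_i-a)_{x_i}(c_i-b)_{x_i}/((c_i)_{x_i}(1+c_i-d)_{x_i}) ∏_{i,k=1}^r (c_i-c_k-m_k)_{x_i}/(1+c_i-c_k)_{x_i} ], where Δ(c+x)/Δ(c) = ∏_{1≤i<j≤r} (c_i+x_i-c_j-x_j)/(c_i-c_j). -/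

import Mathlib

open Finset

/-- Pochhammer symbol (rising factorial) `(x)_k`. -/
noncomputable def poch (x : ℂ) (k : ℕ) : ℂ := ∏ j ∈ Finset.range k, (x + j)

open Asymptotics Filter Topology

/-!
Since `(c + m)_k / (c)_k = ∏_{j < m} (c + j + k) / (c + j)`, the series is, up to a constant,
Gauss's series `₂F₁(a, b; d; 1)` with a factor `y + k` inserted into the general term `t_k` for each
`y = c_i + j`, `j < m_i`. Inserting such factors for arbitrary `y_i`, `i ∈ I`, multiplies
`Γ(d) Γ(d - a - b - #I) / (Γ(d - a) Γ(d - b))` by a sum over the subsets `S` of `I`. This follows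
by induction on `I`: in `(y_z + k) t_k`, the part `k t_k` is again a Gauss term with `a`, `b`, `d`
and all `y_i` shifted by `1`. The matching recurrence for the subset sum holds because, as a
function of `y_z`, that sum has no poles and is therefore linear, with slope read off at infinity
and constant term at `y_z = 0`.

The term of `S` contains the factor `y_i - y_j - 1` for `i ∈ S`, `j ∉ S`. So when the `y` form the
chains `c_i, c_i + 1, …, c_i + m_i - 1`, only unions of initial segments `j < x_i` contribute, and
these are the terms of the multiple sum.
-/

lemma add_natCast_add_natCast_ne_zero {R : Type*} [AddMonoidWithOne R] {x : R}
    (hx : ∀ k : ℕ, x + k ≠ 0) (j k : ℕ) : x + j + k ≠ 0 := by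
  rw [add_assoc, ← Nat.cast_add]
  exact hx (j + k)

section Poch

variable (x : ℂ) (m n : ℕ)

lemma poch_zero : poch x 0 = 1 := prod_range_zero _

lemma poch_succ : poch x (n + 1) = poch x n * (x + n) := prod_range_succ _ _

lemma poch_add : poch x (m + n) = poch x m * poch (x + m) n := by
  simp only [poch, prod_range_add, Nat.cast_add, add_assoc]

lemma poch_succ_left : poch x (n + 1) = x * poch (x + 1) n := by
  rw [add_comm n 1, poch_add, poch_succ, poch_zero, Nat.cast_zero, Nat.cast_one, one_mul, add_zero]

lemma poch_reflect : poch x n = (-1) ^ n * poch (1 - x - n) n := by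
  unfold poch
  rw [← prod_range_reflect, ← card_range n, ← prod_const, card_range, ← prod_mul_distrib]
  refine prod_congr rfl fun j hj => ?_
  have hj' : 1 + j ≤ n := by have := mem_range.1 hj; omega
  rw [Nat.sub_sub, Nat.cast_sub hj']
  push_cast
  ring

variable {x m n}

lemma poch_ne_zero (hx : ∀ k : ℕ, x + k ≠ 0) (n : ℕ) : poch x n ≠ 0 :=
  prod_ne_zero_iff.2 fun j _ => hx j

lemma poch_ne_zero_of_le (hmn : m ≤ n) (h : poch x n ≠ 0) : poch x m ≠ 0 := by
  rw [← Nat.add_sub_cancel' hmn, poch_add] at h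
  exact left_ne_zero_of_mul h

lemma poch_add_natCast_div_poch (hx : ∀ k : ℕ, x + k ≠ 0) (m k : ℕ) :
    poch (x + m) k / poch x k = poch (x + k) m / poch x m := by
  rw [div_eq_div_iff (poch_ne_zero hx k) (poch_ne_zero hx m), mul_comm, ← poch_add, add_comm m k,
    poch_add, mul_comm]

lemma poch_sub_mul_poch_sub (u : ℂ) (p q : ℕ) :
    poch (u - q) p * poch (-u - p) q * (u + p - q) = u * (poch (1 + u) p * poch (1 - u) q) := by
  have hcomm : poch (u - q) p * ((u - q + p) * poch (u - q + p + 1) q) =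
      poch (u - q) q * (u * poch (1 + u) p) := by
    have h : poch (u - q) (p + (q + 1)) = poch (u - q) (q + (p + 1)) := by congr 1; omega
    rwa [poch_add _ p (q + 1), poch_add _ q (p + 1), poch_succ_left, poch_succ_left,
      sub_add_cancel u, add_comm u 1] at h
  have hneg : poch (-u - p) q = (-1) ^ q * poch (u - q + p + 1) q := by
    rw [poch_reflect]
    ring_nf
  have hone : poch (1 - u) q = (-1) ^ q * poch (u - q) q := by
    rw [poch_reflect]
    ring_nf
  rw [hneg, hone]
  linear_combination (-1) ^ q * hcomm

/-- Euler's limit formula. At a pole of `Γ` the convention `Γ a = 0` gives the correct value `0`. -/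
lemma tendsto_poch_succ_div_cpow (a : ℂ) :
    Tendsto (fun n : ℕ => poch a (n + 1) / ((n : ℂ) ^ a * n.factorial)) atTop
      (𝓝 (Complex.Gamma a)⁻¹) := by
  by_cases h : Complex.Gamma a = 0
  · obtain ⟨m, rfl⟩ := (Complex.Gamma_eq_zero_iff a).1 h
    rw [h, inv_zero]
    refine tendsto_const_nhds.congr' ?_
    filter_upwards [eventually_ge_atTop m] with n hn
    have hzero : poch (-(m : ℂ)) (n + 1) = 0 :=
      prod_eq_zero (mem_range.2 (Nat.lt_succ_of_le hn)) (neg_add_cancel _)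
    rw [hzero, zero_div]
  · refine ((Complex.GammaSeq_tendsto_Gamma a).inv₀ h).congr fun n => ?_
    rw [Complex.GammaSeq, inv_div, poch]

lemma tendsto_poch_div_cpow (a : ℂ) :
    Tendsto (fun n : ℕ => poch a n / ((n : ℂ) ^ (a - 1) * n.factorial)) atTop
      (𝓝 (Complex.Gamma a)⁻¹) := by
  have h := (tendsto_poch_succ_div_cpow a).mul (tendsto_natCast_div_add_atTop a)
  rw [mul_one] at h
  have hadd : ∀ᶠ n : ℕ in atTop, (n : ℂ) + a ≠ 0 :=
    (tendsto_add_const_cobounded a).comp tendsto_natCast_atTop_cobounded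
      |>.eventually (Bornology.eventually_ne_cobounded 0)
  refine h.congr' ?_
  filter_upwards [eventually_ne_atTop 0, hadd] with n hn hna
  have hn' : (n : ℂ) ≠ 0 := Nat.cast_ne_zero.2 hn
  rw [poch_succ, Complex.cpow_sub _ _ hn', Complex.cpow_one, add_comm a]
  field_simp

end Poch

/-- The general term of Gauss's series `₂F₁(a, b; d; 1)`. -/
noncomputable def gaussTerm (a b d : ℂ) (k : ℕ) : ℂ :=
  poch a k * poch b k / ((k.factorial : ℂ) * poch d k)

section Gauss

variable {a b d : ℂ}

lemma gaussTerm_zero (a b d : ℂ) : gaussTerm a b d 0 = 1 := by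
  simp [gaussTerm, poch_zero]

lemma gaussTerm_succ (hd : ∀ k : ℕ, d + k ≠ 0) (k : ℕ) :
    (k + 1) * gaussTerm a b d (k + 1) = (a + k) * (b + k) / (d + k) * gaussTerm a b d k := by
  have hk := hd k
  have hpoch := poch_ne_zero hd k
  have hsucc : (k + 1 : ℂ) ≠ 0 := k.cast_add_one_ne_zero
  simp only [gaussTerm, poch_succ, Nat.factorial_succ, Nat.cast_mul, Nat.cast_succ]
  field_simp

lemma gaussTerm_succ_left (hd : ∀ k : ℕ, d + k ≠ 0) (k : ℕ) :
    (k + 1) * gaussTerm a b d (k + 1) = a * b / d * gaussTerm (a + 1) (b + 1) (d + 1) k := by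
  have hd0 : d ≠ 0 := by simpa using hd 0
  have hpoch := poch_ne_zero hd (k + 1)
  rw [poch_succ_left] at hpoch
  have hsucc : (k + 1 : ℂ) ≠ 0 := k.cast_add_one_ne_zero
  simp only [gaussTerm, poch_succ_left, Nat.factorial_succ, Nat.cast_mul, Nat.cast_succ]
  field_simp

lemma gaussTerm_add_one_right (hd : ∀ k : ℕ, d + k ≠ 0) (k : ℕ) :
    (d + k) * gaussTerm a b (d + 1) k = d * gaussTerm a b d k := by
  have hk := hd k
  have hd0 : d ≠ 0 := by simpa using hd 0
  have hpoch := poch_ne_zero hd k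
  have hshift : poch (d + 1) k = poch d k * (d + k) / d := by
    rw [← poch_succ, poch_succ_left, mul_div_cancel_left₀ _ hd0]
  simp only [gaussTerm, hshift]
  field_simp

lemma tendsto_gaussTerm_div_cpow (hd : ∀ k : ℕ, d + k ≠ 0) :
    Tendsto (fun n : ℕ => gaussTerm a b d n / (n : ℂ) ^ (a + b - d - 1)) atTop
      (𝓝 (Complex.Gamma d / (Complex.Gamma a * Complex.Gamma b))) := by
  have hΓ : Complex.Gamma d ≠ 0 :=
    Complex.Gamma_ne_zero fun m h => hd m (by rw [h, neg_add_cancel])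
  have hlim := ((tendsto_poch_div_cpow a).mul (tendsto_poch_div_cpow b)).div
    (tendsto_poch_div_cpow d) (inv_ne_zero hΓ)
  rw [← mul_inv, div_inv_eq_mul, inv_mul_eq_div] at hlim
  refine hlim.congr' ?_
  filter_upwards [eventually_ne_atTop 0] with n hn
  have hn' : (n : ℂ) ≠ 0 := Nat.cast_ne_zero.2 hn
  have hpow (w : ℂ) : (n : ℂ) ^ w ≠ 0 := by simp [Complex.cpow_eq_zero_iff, hn']
  have hexp : (n : ℂ) ^ (a + b - d - 1) * (n : ℂ) ^ (d - 1) =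
      (n : ℂ) ^ (a - 1) * (n : ℂ) ^ (b - 1) := by
    rw [← Complex.cpow_add _ _ hn', ← Complex.cpow_add _ _ hn']
    ring_nf
  have hpoch := poch_ne_zero hd n
  simp only [gaussTerm, Pi.div_apply]
  field_simp [hpow]
  linear_combination (poch a n * poch b n / n.factorial) * hexp

lemma gaussTerm_isBigO (hd : ∀ k : ℕ, d + k ≠ 0) :
    gaussTerm a b d =O[atTop] fun n : ℕ => (n : ℝ) ^ (-(d - a - b).re - 1) := by
  have hne : ∀ᶠ n : ℕ in atTop, (n : ℂ) ^ (a + b - d - 1) = 0 → gaussTerm a b d n = 0 := by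
    filter_upwards [eventually_ne_atTop 0] with n hn h
    exact absurd ((Complex.cpow_eq_zero_iff _ _).1 h).1 (Nat.cast_ne_zero.2 hn)
  refine (isBigO_of_div_tendsto_nhds hne _ (tendsto_gaussTerm_div_cpow hd)).trans
    (IsBigO.of_norm_eventuallyLE ?_)
  filter_upwards [eventually_gt_atTop 0] with n hn
  rw [Complex.norm_natCast_cpow_of_pos hn]
  apply le_of_eq
  congr 1
  simp
  ring

lemma summable_gaussTerm (hd : ∀ k : ℕ, d + k ≠ 0) (h : 0 < (d - a - b).re) :
    Summable (gaussTerm a b d) :=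
  summable_of_isBigO_nat (Real.summable_nat_rpow.2 (by linarith)) (gaussTerm_isBigO hd)

lemma tendsto_mul_gaussTerm (hd : ∀ k : ℕ, d + k ≠ 0) (h : 0 < (d - a - b).re) :
    Tendsto (fun n : ℕ => (n : ℂ) * gaussTerm a b d n) atTop (𝓝 0) := by
  have hcast : (fun n : ℕ => (n : ℂ)) =O[atTop] fun n : ℕ => (n : ℝ) :=
    IsBigO.of_norm_le fun n => (Complex.norm_natCast n).le
  refine (hcast.mul (gaussTerm_isBigO hd)).trans_tendsto <|
    ((tendsto_rpow_neg_atTop h).comp (tendsto_natCast_atTop_atTop (R := ℝ))).congr' ?_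
  filter_upwards [eventually_gt_atTop 0] with n hn
  have hn' : (0 : ℝ) < n := Nat.cast_pos.2 hn
  rw [Function.comp_apply, Real.rpow_sub_one hn'.ne', mul_div_cancel₀ _ hn'.ne']

/-- The difference of the two sides is the sum of a series that telescopes termwise. -/
lemma tsum_gaussTerm_contiguous (hd : ∀ k : ℕ, d + k ≠ 0) (h : 0 < (d - a - b).re) :
    d * (d - a - b) * ∑' k, gaussTerm a b d k =
      (d - a) * (d - b) * ∑' k, gaussTerm a b (d + 1) k := by
  have hd' : ∀ k : ℕ, d + 1 + k ≠ 0 := by simpa using add_natCast_add_natCast_ne_zero hd 1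
  have hleft := (summable_gaussTerm hd h).hasSum.mul_left (d * (d - a - b))
  have hright := (summable_gaussTerm (a := a) (b := b) hd'
    (by simp only [Complex.sub_re, Complex.add_re, Complex.one_re] at h ⊢; linarith)).hasSum
      |>.mul_left ((d - a) * (d - b))
  have htelescope : ∀ k : ℕ,
      d * (d - a - b) * gaussTerm a b d k - (d - a) * (d - b) * gaussTerm a b (d + 1) k =
        -d * ((k + 1 : ℕ) * gaussTerm a b d (k + 1)) - -d * (k * gaussTerm a b d k) := by
    intro k
    have hk := hd k
    have hshift := gaussTerm_add_one_right (a := a) (b := b) hd k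
    rw [Nat.cast_succ, gaussTerm_succ hd k]
    field_simp
    linear_combination -(d - a) * (d - b) * hshift
  rw [← sub_eq_zero]
  refine tendsto_nhds_unique (hleft.sub hright).tendsto_sum_nat ?_
  simp_rw [htelescope, sum_range_sub fun k : ℕ => -d * (k * gaussTerm a b d k)]
  simpa using (tendsto_mul_gaussTerm hd h).const_mul (-d)

lemma poch_mul_tsum_gaussTerm (n : ℕ) (hd : ∀ k : ℕ, d + k ≠ 0) (h : 0 < (d - a - b).re) :
    poch d n * poch (d - a - b) n * ∑' k, gaussTerm a b d k =
      poch (d - a) n * poch (d - b) n * ∑' k, gaussTerm a b (d + n) k := by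
  induction n with
  | zero => simp [poch_zero]
  | succ n ih =>
    have hstep := tsum_gaussTerm_contiguous (a := a) (b := b)
      (add_natCast_add_natCast_ne_zero hd n) (by
        simp only [Complex.sub_re, Complex.add_re, Complex.natCast_re] at h ⊢
        linarith [n.cast_nonneg (α := ℝ)])
    rw [add_assoc d, ← Nat.cast_succ] at hstep
    simp only [poch_succ]
    linear_combination (d + n) * (d + n - a - b) * ih + poch (d - a) n * poch (d - b) n * hstep

lemma norm_gaussTerm_add_natCast_le (hd : ∀ k : ℕ, d + k ≠ 0) {n : ℕ} (hn : 0 ≤ 2 * d.re + n)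
    (k : ℕ) : ‖gaussTerm a b (d + n) k‖ ≤ ‖gaussTerm a b d k‖ := by
  have hpoch : 0 < ‖poch d k‖ := norm_pos_iff.2 (poch_ne_zero hd k)
  have hfact : 0 < ‖(k.factorial : ℂ)‖ := norm_pos_iff.2 (Nat.cast_ne_zero.2 k.factorial_ne_zero)
  simp only [gaussTerm, norm_div, norm_mul]
  gcongr
  simp only [poch, norm_prod]
  refine prod_le_prod (fun _ _ => norm_nonneg _) fun j _ => ?_
  rw [← sq_le_sq₀ (norm_nonneg _) (norm_nonneg _), ← Complex.normSq_eq_norm_sq,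
    ← Complex.normSq_eq_norm_sq, Complex.normSq_apply, Complex.normSq_apply]
  simp only [Complex.add_re, Complex.natCast_re, Complex.add_im, Complex.natCast_im, add_zero]
  nlinarith [mul_nonneg n.cast_nonneg (add_nonneg hn (mul_nonneg zero_le_two j.cast_nonneg))]

lemma tendsto_gaussTerm_add_natCast (a b d : ℂ) (k : ℕ) :
    Tendsto (fun n : ℕ => gaussTerm a b (d + n) k) atTop (𝓝 (if k = 0 then 1 else 0)) := by
  rcases k with _ | k
  · simp [gaussTerm_zero]
  have hfactor : ∀ n : ℕ, gaussTerm a b (d + n) (k + 1) =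
      poch a (k + 1) * poch b (k + 1) / (k + 1).factorial *
        ∏ j ∈ range (k + 1), (d + j + n)⁻¹ := by
    intro n
    simp only [prod_inv_distrib, gaussTerm, ← div_eq_mul_inv, div_div, poch, add_right_comm d]
  have hinv (j : ℕ) : Tendsto (fun n : ℕ => (d + j + n)⁻¹) atTop (𝓝 0) :=
    tendsto_inv₀_cobounded.comp
      ((tendsto_const_add_cobounded _).comp tendsto_natCast_atTop_cobounded)
  simp_rw [hfactor]
  simpa using (tendsto_finsetProd (range (k + 1)) fun j _ => hinv j).const_mul
    (poch a (k + 1) * poch b (k + 1) / (k + 1).factorial)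

lemma tendsto_tsum_gaussTerm_add_natCast (hd : ∀ k : ℕ, d + k ≠ 0) (h : 0 < (d - a - b).re) :
    Tendsto (fun n : ℕ => ∑' k, gaussTerm a b (d + n) k) atTop (𝓝 1) := by
  rw [← tsum_ite_eq (0 : ℕ) fun _ => (1 : ℂ)]
  refine tendsto_tsum_of_dominated_convergence (summable_gaussTerm hd h).norm
    (tendsto_gaussTerm_add_natCast a b d) ?_
  obtain ⟨N, hN⟩ := exists_nat_ge (-(2 * d.re))
  filter_upwards [eventually_ge_atTop N] with n hn k
  have hNn : (N : ℝ) ≤ n := Nat.cast_le.2 hn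
  exact norm_gaussTerm_add_natCast_le hd (by linarith) k

theorem hasSum_gaussTerm (hd : ∀ k : ℕ, d + k ≠ 0) (h : 0 < (d - a - b).re) :
    HasSum (gaussTerm a b d) (Complex.Gamma d * Complex.Gamma (d - a - b) /
      (Complex.Gamma (d - a) * Complex.Gamma (d - b))) := by
  have hΓ : Complex.Gamma d ≠ 0 :=
    Complex.Gamma_ne_zero fun m h => hd m (by rw [h, neg_add_cancel])
  have hΓ' := Complex.Gamma_ne_zero_of_re_pos h
  have hleft := ((tendsto_poch_div_cpow d).mul (tendsto_poch_div_cpow (d - a - b))).mul_const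
    (∑' k, gaussTerm a b d k)
  have hright := ((tendsto_poch_div_cpow (d - a)).mul (tendsto_poch_div_cpow (d - b))).mul
    (tendsto_tsum_gaussTerm_add_natCast hd h)
  have hlim := tendsto_nhds_unique_of_eventuallyEq hleft hright <| by
    filter_upwards [eventually_ne_atTop 0] with n hn
    have hn' : (n : ℂ) ≠ 0 := Nat.cast_ne_zero.2 hn
    have hexp : (n : ℂ) ^ (d - 1) * (n : ℂ) ^ (d - a - b - 1) =
        (n : ℂ) ^ (d - a - 1) * (n : ℂ) ^ (d - b - 1) := by
      rw [← Complex.cpow_add _ _ hn', ← Complex.cpow_add _ _ hn']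
      ring_nf
    rw [div_mul_div_comm, div_mul_div_comm, div_mul_eq_mul_div, div_mul_eq_mul_div,
      poch_mul_tsum_gaussTerm n hd h, mul_mul_mul_comm, hexp, mul_mul_mul_comm]
  refine (summable_gaussTerm hd h).hasSum_iff.2 ?_
  rw [div_eq_mul_inv, mul_inv, ← mul_one ((Complex.Gamma (d - a))⁻¹ * _), ← hlim]
  field_simp

lemma hasSum_natCast_mul_gaussTerm_mul (hd : ∀ k : ℕ, d + k ≠ 0) {f : ℕ → ℂ} {v : ℂ}
    (hf : HasSum (fun k => gaussTerm (a + 1) (b + 1) (d + 1) k * f (k + 1)) v) :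
    HasSum (fun k : ℕ => k * (gaussTerm a b d k * f k)) (a * b / d * v) := by
  refine (hasSum_nat_add_iff' 1).1 ?_
  simp only [sum_range_one, Nat.cast_zero, zero_mul, sub_zero]
  refine (hf.mul_left (a * b / d)).congr_fun fun k => ?_
  rw [← mul_assoc, ← mul_assoc, ← gaussTerm_succ_left hd, Nat.cast_succ]

end Gauss

section SubsetSum

open Polynomial

variable {K ι : Type*} [Field K] [DecidableEq ι]

/-- The contribution of the subset `S` of `I` to `gaussFactor a b d y I`. -/
def subsetWeight (a b d : K) (y : ι → K) (I S : Finset ι) : K :=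
  (∏ j ∈ S, (y j - a) * (y j - b)) * (∏ j ∈ I \ S, y j * (d - 1 - y j)) *
    ∏ i ∈ S, ∏ j ∈ I \ S, (y i - y j - 1) / (y i - y j)

/-- The factor, a polynomial in the `y i`, by which inserting `∏ i ∈ I, (y i + k)` into the general
term of Gauss's series `₂F₁(a, b; d; 1)` multiplies the value
`Γ(d) Γ(d - a - b - #I) / (Γ(d - a) Γ(d - b))`. -/
def gaussFactor (a b d : K) (y : ι → K) (I : Finset ι) : K :=
  ∑ S ∈ I.powerset, subsetWeight a b d y I S

variable (a b d : K) {y : ι → K} {I S : Finset ι}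

lemma subsetWeight_eq_zero {i j : ι} (hi : i ∈ S) (hj : j ∈ I \ S) (hij : y i = y j + 1) :
    subsetWeight a b d y I S = 0 :=
  mul_eq_zero_of_right _ <| prod_eq_zero hi <| prod_eq_zero hj <| by
    rw [hij, add_sub_cancel_left, sub_self, zero_div]

section Insert

variable {z : ι}

lemma subsetWeight_insert_left (y : ι → K) (hz : z ∉ I) (hS : S ⊆ I) :
    subsetWeight a b d y (insert z I) S = subsetWeight a b d y I S *
      (y z * (d - 1 - y z) * ∏ u ∈ S, (y u - y z - 1) / (y u - y z)) := by
  have hsdiff : insert z I \ S = insert z (I \ S) := insert_sdiff_of_notMem _ fun h => hz (hS h)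
  have hz' : z ∉ I \ S := fun h => hz (sdiff_subset h)
  simp only [subsetWeight, hsdiff, prod_insert hz', prod_mul_distrib]
  ring

lemma subsetWeight_insert_insert (y : ι → K) (hz : z ∉ I) (hS : S ⊆ I) :
    subsetWeight a b d y (insert z I) (insert z S) = subsetWeight a b d y I S *
      ((y z - a) * (y z - b) * ∏ v ∈ I \ S, (y z - y v - 1) / (y z - y v)) := by
  have hsdiff : insert z I \ insert z S = I \ S := by
    rw [insert_sdiff_insert, sdiff_insert_of_notMem hz]
  have hz' : z ∉ S := fun h => hz (hS h)
  simp only [subsetWeight, hsdiff, prod_insert hz', prod_mul_distrib]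
  ring

end Insert

/-- The numerator, as a polynomial in `y z`, of the factor in `subsetWeight_insert_insert` over the
common denominator `∏ i ∈ I, (y z - y i)`. -/
noncomputable def memPoly (y : ι → K) (I S : Finset ι) : K[X] :=
  (X - C a) * (X - C b) * ((∏ v ∈ I \ S, (X - C (y v + 1))) * ∏ u ∈ S, (X - C (y u)))

/-- The negative of the numerator, as a polynomial in `y z`, of the factor in
`subsetWeight_insert_left` over the common denominator `∏ i ∈ I, (y z - y i)`; the sign makes it
monic. -/
noncomputable def notMemPoly (y : ι → K) (I S : Finset ι) : K[X] :=
  X * (X - C (d - 1)) * ((∏ v ∈ I \ S, (X - C (y v))) * ∏ u ∈ S, (X - C (y u - 1)))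

/-- The polynomial in `x = y z` representing
`gaussFactor a b d y (insert z I) * ∏ i ∈ I, (x - y i)`. -/
noncomputable def insertPoly (y : ι → K) (I : Finset ι) : K[X] :=
  ∑ S ∈ I.powerset, C (subsetWeight a b d y I S) * (memPoly a b y I S - notMemPoly d y I S)

lemma eval_insertPoly (x : K) :
    (insertPoly a b d y I).eval x = ∑ S ∈ I.powerset, subsetWeight a b d y I S *
      ((memPoly a b y I S).eval x - (notMemPoly d y I S).eval x) := by
  simp only [insertPoly, eval_finsetSum, eval_mul, eval_C, eval_sub]

lemma eval_memPoly (hS : S ⊆ I) {x : K} (hx : ∀ i ∈ I, x ≠ y i) :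
    (memPoly a b y I S).eval x = (x - a) * (x - b) *
      (∏ v ∈ I \ S, (x - y v - 1) / (x - y v)) * ∏ i ∈ I, (x - y i) := by
  have hne : ∏ v ∈ I \ S, (x - y v) ≠ 0 :=
    prod_ne_zero_iff.2 fun v hv => sub_ne_zero.2 (hx v (sdiff_subset hv))
  rw [← prod_sdiff hS, prod_div_distrib]
  simp only [memPoly, eval_mul, eval_prod, eval_sub, eval_X, eval_C, ← sub_sub]
  field_simp

lemma eval_notMemPoly (hS : S ⊆ I) {x : K} (hx : ∀ i ∈ I, x ≠ y i) :
    (notMemPoly d y I S).eval x = -(x * (d - 1 - x) *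
      (∏ u ∈ S, (y u - x - 1) / (y u - x)) * ∏ i ∈ I, (x - y i)) := by
  have hne : ∏ u ∈ S, (x - y u) ≠ 0 :=
    prod_ne_zero_iff.2 fun v hv => sub_ne_zero.2 (hx v (hS hv))
  have hneg : ∏ u ∈ S, (y u - x - 1) / (y u - x) = ∏ u ∈ S, (x - (y u - 1)) / (x - y u) :=
    prod_congr rfl fun u _ => by rw [← neg_div_neg_eq]; congr 1 <;> ring
  rw [← prod_sdiff hS, hneg, prod_div_distrib]
  simp only [notMemPoly, eval_mul, eval_prod, eval_sub, eval_X, eval_C]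
  field_simp
  ring

lemma eval_insertPoly_of_forall_ne {z : ι} (hz : z ∉ I) (hx : ∀ i ∈ I, y z ≠ y i) :
    (insertPoly a b d y I).eval (y z) =
      gaussFactor a b d y (insert z I) * ∏ i ∈ I, (y z - y i) := by
  rw [eval_insertPoly, gaussFactor, sum_powerset_insert hz, ← sum_add_distrib, sum_mul]
  refine sum_congr rfl fun S hS => ?_
  have hS' := mem_powerset.1 hS
  rw [eval_memPoly a b hS' hx, eval_notMemPoly d hS' hx, subsetWeight_insert_left a b d y hz hS',
    subsetWeight_insert_insert a b d y hz hS']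
  ring

/-- The terms of `S` and `insert t S` cancel: `gaussFactor` has no pole at `y z = y t`. -/
lemma eval_insertPoly_node (hy : Set.InjOn y I) {t : ι} (ht : t ∈ I) :
    (insertPoly a b d y I).eval (y t) = 0 := by
  obtain ⟨J, htJ, rfl⟩ : ∃ J, t ∉ J ∧ insert t J = I :=
    ⟨I.erase t, notMem_erase t I, insert_erase ht⟩
  have hx : ∀ i ∈ J, y t ≠ y i := fun i hi h =>
    htJ (hy (mem_insert_self t J) (mem_insert_of_mem hi) h ▸ hi)
  rw [eval_insertPoly, sum_powerset_insert htJ, ← sum_add_distrib]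
  refine sum_eq_zero fun S hS => ?_
  have hS' := mem_powerset.1 hS
  have htS : t ∉ S := fun h => htJ (hS' h)
  have htJS : t ∉ J \ S := fun h => htJ (sdiff_subset h)
  have hsdiff : insert t J \ S = insert t (J \ S) := insert_sdiff_of_notMem _ htS
  have hsdiff' : insert t J \ insert t S = J \ S := by
    rw [insert_sdiff_insert, sdiff_insert_of_notMem htJ]
  have hmem : (memPoly a b y (insert t J) S).eval (y t) = -(memPoly a b y J S).eval (y t) := by
    simp only [memPoly, hsdiff, prod_insert htJS, eval_mul, eval_sub, eval_X, eval_C]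
    ring
  have hnotMem : (notMemPoly d y (insert t J) S).eval (y t) = 0 := by
    simp [notMemPoly, hsdiff, prod_insert htJS]
  have hmem' : (memPoly a b y (insert t J) (insert t S)).eval (y t) = 0 := by
    simp [memPoly, hsdiff', prod_insert htS]
  have hnotMem' : (notMemPoly d y (insert t J) (insert t S)).eval (y t) =
      (notMemPoly d y J S).eval (y t) := by
    simp only [notMemPoly, hsdiff', prod_insert htS, eval_mul, eval_sub, eval_X, eval_C]
    ring
  rw [hmem, hnotMem, hmem', hnotMem', eval_memPoly a b hS' hx, eval_notMemPoly d hS' hx,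
    subsetWeight_insert_left _ _ _ _ htJ hS', subsetWeight_insert_insert _ _ _ _ htJ hS']
  ring

lemma subsetWeight_mul_eval_memPoly_zero (hS : S ⊆ I) (hy : ∀ i ∈ I, y i ≠ 0) :
    subsetWeight a b d y I S * (memPoly a b y I S).eval 0 =
      a * b * subsetWeight (a + 1) (b + 1) (d + 1) (y + 1) I S * ∏ i ∈ I, (0 - y i) := by
  have hne : ∏ v ∈ I \ S, y v ≠ 0 := prod_ne_zero_iff.2 fun v hv => hy v (sdiff_subset hv)
  have hratio : ∏ v ∈ I \ S, (0 - y v - 1) / (0 - y v) =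
      (∏ v ∈ I \ S, (y v + 1)) / ∏ v ∈ I \ S, y v := by
    rw [← prod_div_distrib]
    exact prod_congr rfl fun u _ => by rw [← neg_div_neg_eq]; congr 1 <;> ring
  have hd (j : ι) : d + 1 - 1 - (y j + 1) = d - 1 - y j := by ring
  rw [eval_memPoly a b hS fun i hi => (hy i hi).symm]
  simp only [subsetWeight, Pi.add_apply, Pi.one_apply, hratio, hd, prod_mul_distrib (s := I \ S),
    add_sub_add_right_eq_sub]
  field_simp
  ring

lemma eval_insertPoly_zero (hy : ∀ i ∈ I, y i ≠ 0) :
    (insertPoly a b d y I).eval 0 =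
      a * b * gaussFactor (a + 1) (b + 1) (d + 1) (y + 1) I * ∏ i ∈ I, (0 - y i) := by
  rw [eval_insertPoly, gaussFactor, mul_sum, sum_mul]
  refine sum_congr rfl fun S hS => ?_
  rw [← subsetWeight_mul_eval_memPoly_zero a b d (mem_powerset.1 hS) hy]
  simp [notMemPoly]

/-- The `n`-th coefficients of the two products of degree `n + 1` are `-s.sum` and `-t.sum`. -/
lemma degree_prod_X_sub_C_sub_sub_lt {R : Type*} [CommRing R] {n : ℕ} {s t : Multiset R} {q : R[X]}
    (hs : s.card = n + 1) (ht : t.card = n + 1) (hq : q.Monic) (hqn : q.natDegree = n) :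
    ((s.map (X - C ·)).prod - (t.map (X - C ·)).prod - C (t.sum - s.sum) * q).degree < n := by
  nontriviality R
  have hcoeff {u : Multiset R} (hu : u.card = n + 1) :
      (u.map (X - C ·)).prod.coeff n = -u.sum := by
    have hdeg : (u.map (X - C ·)).prod.natDegree = n + 1 := by
      rw [natDegree_multiset_prod_X_sub_C_eq_card, hu]
    rw [← multiset_prod_X_sub_C_nextCoeff, nextCoeff_of_natDegree_pos (by omega), hdeg,
      Nat.add_sub_cancel]
  have hdiff : ((s.map (X - C ·)).prod - (t.map (X - C ·)).prod).degree <
      ((n + 1 : ℕ) : WithBot ℕ) := by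
    have hdeg {u : Multiset R} (hu : u.card = n + 1) :
        (u.map (X - C ·)).prod.degree = ((n + 1 : ℕ) : WithBot ℕ) := by
      rw [degree_eq_natDegree (monic_multisetProd_X_sub_C u).ne_zero,
        natDegree_multiset_prod_X_sub_C_eq_card, hu]
    rw [← hdeg hs]
    refine degree_sub_lt_left (by rw [hdeg hs, hdeg ht]) (monic_multisetProd_X_sub_C s).ne_zero ?_
    rw [(monic_multisetProd_X_sub_C s).leadingCoeff, (monic_multisetProd_X_sub_C t).leadingCoeff]
  rw [degree_lt_iff_coeff_zero] at hdiff ⊢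
  intro m hm
  rw [coeff_sub, coeff_C_mul]
  rcases hm.eq_or_lt with rfl | hlt
  · rw [coeff_sub, hcoeff hs, hcoeff ht, ← hqn, hq.coeff_natDegree]
    ring
  · rw [hdiff m hlt, coeff_eq_zero_of_natDegree_lt (by omega), mul_zero, sub_zero]

lemma degree_memPoly_sub_notMemPoly_sub_lt (y : ι → K) (hS : S ⊆ I) :
    (memPoly a b y I S - notMemPoly d y I S -
      C (d - a - b - #I - 1) * (X * ∏ i ∈ I, (X - C (y i)))).degree <
        ((#I + 1 : ℕ) : WithBot ℕ) := by
  have hcard := card_sdiff_add_card_eq_card hS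
  set s : Multiset K := a ::ₘ b ::ₘ ((I \ S).val.map (y · + 1) + S.val.map y)
  set t : Multiset K := 0 ::ₘ (d - 1) ::ₘ ((I \ S).val.map y + S.val.map (y · - 1))
  have hs : memPoly a b y I S = (s.map (X - C ·)).prod := by
    simp only [s, memPoly, Multiset.map_cons, Multiset.prod_cons, Multiset.map_add,
      Multiset.prod_add, Multiset.map_map, Function.comp_def, prod_map_val, mul_assoc]
  have ht : notMemPoly d y I S = (t.map (X - C ·)).prod := by
    simp only [t, notMemPoly, Multiset.map_cons, Multiset.prod_cons, Multiset.map_add,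
      Multiset.prod_add, Multiset.map_map, Function.comp_def, prod_map_val, C_0, sub_zero,
      mul_assoc]
  have hsum : t.sum - s.sum = d - a - b - #I - 1 := by
    have hs_sum : s.sum = a + b + ((∑ v ∈ I \ S, y v) + #(I \ S) + ∑ u ∈ S, y u) := by
      simp only [s, Multiset.sum_cons, Multiset.sum_add, sum_map_val, sum_add_distrib, sum_const,
        nsmul_one]
      ring
    have ht_sum : t.sum = d - 1 + ((∑ v ∈ I \ S, y v) + (∑ u ∈ S, y u - #S)) := by
      simp only [t, Multiset.sum_cons, Multiset.sum_add, sum_map_val, sum_sub_distrib, sum_const,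
        nsmul_one]
      ring
    rw [hs_sum, ht_sum, ← hcard, Nat.cast_add]
    ring
  have hmonic : (∏ i ∈ I, (X - C (y i))).Monic := monic_prod_X_sub_C y I
  have hdeg : (X * ∏ i ∈ I, (X - C (y i))).natDegree = #I + 1 := by
    rw [monic_X.natDegree_mul hmonic, natDegree_X, natDegree_finsetProd_X_sub_C_eq_card, add_comm]
  rw [hs, ht, ← hsum]
  refine degree_prod_X_sub_C_sub_sub_lt ?_ ?_ (monic_X.mul hmonic) hdeg <;>
    simp only [s, t, Multiset.card_cons, Multiset.card_add, Multiset.card_map, card_val] <;> omega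

/-- Both sides agree at `0` and at the `#I` points `y i`, and their difference has degree at most
`#I`. -/
lemma insertPoly_eq (hy : Set.InjOn y I) (hy0 : ∀ i ∈ I, y i ≠ 0) :
    insertPoly a b d y I = (C ((d - a - b - #I - 1) * gaussFactor a b d y I) * X +
      C (a * b * gaussFactor (a + 1) (b + 1) (d + 1) (y + 1) I)) * ∏ i ∈ I, (X - C (y i)) := by
  classical
  set β := a * b * gaussFactor (a + 1) (b + 1) (d + 1) (y + 1) I with hβ
  set P : K[X] := ∏ i ∈ I, (X - C (y i)) with hP
  refine eq_of_degree_sub_lt_of_eval_finset_eq (insert 0 (I.image y)) ?_ fun x hx => ?_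
  · have hsplit : insertPoly a b d y I - (C ((d - a - b - #I - 1) * gaussFactor a b d y I) * X +
        C β) * P = ∑ S ∈ I.powerset, subsetWeight a b d y I S • (memPoly a b y I S -
          notMemPoly d y I S - C (d - a - b - #I - 1) * (X * P)) - β • P := by
      simp only [insertPoly, gaussFactor, smul_eq_C_mul, mul_sub, sum_sub_distrib, ← sum_mul,
        C_mul, ← map_sum]
      ring
    rw [card_insert_of_notMem (by simpa using hy0), card_image_of_injOn hy, hsplit]
    refine (degree_sub_le _ _).trans_lt (max_lt ?_ ?_)
    · refine (degree_sum_le _ _).trans_lt ((Finset.sup_lt_iff (WithBot.bot_lt_coe _)).2 ?_)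
      exact fun S hS => (degree_smul_le _ _).trans_lt <|
        degree_memPoly_sub_notMemPoly_sub_lt a b d y (mem_powerset.1 hS)
    · refine (degree_smul_le _ _).trans_lt ?_
      rw [hP, degree_eq_natDegree (monic_prod_X_sub_C y I).ne_zero,
        natDegree_finsetProd_X_sub_C_eq_card]
      exact_mod_cast Nat.lt_succ_self _
  · rcases mem_insert.1 hx with rfl | hx
    · simp [eval_insertPoly_zero a b d hy0, hβ, hP, eval_prod]
    · obtain ⟨t, ht, rfl⟩ := mem_image.1 hx
      rw [eval_insertPoly_node a b d hy ht, eval_mul, hP, eval_prod, prod_eq_zero ht (by simp),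
        mul_zero]

lemma gaussFactor_insert {z : ι} (hz : z ∉ I) (hy : Set.InjOn y (insert z I : Finset ι))
    (hy0 : ∀ i ∈ I, y i ≠ 0) :
    gaussFactor a b d y (insert z I) = y z * (d - a - b - #I - 1) * gaussFactor a b d y I +
      a * b * gaussFactor (a + 1) (b + 1) (d + 1) (y + 1) I := by
  have hx : ∀ i ∈ I, y z ≠ y i := fun i hi h =>
    hz (hy (mem_insert_self z I) (mem_insert_of_mem hi) h ▸ hi)
  have hprod : ∏ i ∈ I, (y z - y i) ≠ 0 := prod_ne_zero_iff.2 fun i hi => sub_ne_zero.2 (hx i hi)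
  refine mul_right_cancel₀ hprod ?_
  rw [← eval_insertPoly_of_forall_ne a b d hz hx,
    insertPoly_eq a b d (hy.mono (coe_subset.2 (subset_insert z I))) hy0]
  simp only [eval_mul, eval_add, eval_C, eval_X, eval_prod, eval_sub]
  ring

end SubsetSum

section GaussProd

variable {ι : Type*} [DecidableEq ι] {a b d : ℂ} {y : ι → ℂ} {I : Finset ι}

lemma hasSum_gaussTerm_mul_prod_insert {z : ι} (hz : z ∉ I) (hd : ∀ k : ℕ, d + k ≠ 0) {v w : ℂ}
    (hv : HasSum (fun k : ℕ => gaussTerm a b d k * ∏ i ∈ I, (y i + k)) v)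
    (hw : HasSum (fun k : ℕ =>
      gaussTerm (a + 1) (b + 1) (d + 1) k * ∏ i ∈ I, ((y + 1) i + k)) w) :
    HasSum (fun k : ℕ => gaussTerm a b d k * ∏ i ∈ insert z I, (y i + k))
      (y z * v + a * b / d * w) := by
  have hshift (k : ℕ) : ∏ i ∈ I, ((y + 1) i + k) = ∏ i ∈ I, (y i + (k + 1 : ℕ)) :=
    prod_congr rfl fun i _ => by
      rw [Pi.add_apply, Pi.one_apply, Nat.cast_succ, add_assoc, add_comm 1]
  simp only [hshift] at hw
  have hw' := hasSum_natCast_mul_gaussTerm_mul hd (f := fun k => ∏ i ∈ I, (y i + k)) hw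
  refine ((hv.mul_left (y z)).add hw').congr_fun fun k => ?_
  rw [prod_insert hz]
  ring

theorem hasSum_gaussTerm_mul_prod (hd : ∀ k : ℕ, d + k ≠ 0) (h : 0 < (d - a - b - #I).re)
    (hy : Set.InjOn y I) (hy0 : ∀ i ∈ I, ∀ k : ℕ, y i + k ≠ 0) :
    HasSum (fun k : ℕ => gaussTerm a b d k * ∏ i ∈ I, (y i + k))
      (Complex.Gamma d * Complex.Gamma (d - a - b - #I) /
        (Complex.Gamma (d - a) * Complex.Gamma (d - b)) * gaussFactor a b d y I) := by
  induction I using Finset.induction_on generalizing a b d y with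
  | empty =>
    simp only [card_empty, Nat.cast_zero, sub_zero] at h
    simpa [gaussFactor, subsetWeight] using hasSum_gaussTerm hd h
  | insert z I hz ih =>
    have hyI : Set.InjOn y I := hy.mono (coe_subset.2 (subset_insert z I))
    have hyI0 : ∀ i ∈ I, ∀ k : ℕ, y i + k ≠ 0 := fun i hi => hy0 i (mem_insert_of_mem hi)
    have hd0 : d ≠ 0 := by simpa using hd 0
    set s := d - a - b - #(insert z I) with hs
    have hcard : (#(insert z I) : ℂ) = #I + 1 := by rw [card_insert_of_notMem hz, Nat.cast_succ]
    have hs0 : d - a - b - #I = s + 1 := by rw [hs, hcard]; ring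
    have hs1 : d + 1 - (a + 1) - (b + 1) - #I = s := by rw [hs, hcard]; ring
    have hv := ih hd (by rw [hs0, Complex.add_re, Complex.one_re]; linarith) hyI hyI0
    have hw := ih (a := a + 1) (b := b + 1) (d := d + 1) (y := y + 1)
      (by simpa using add_natCast_add_natCast_ne_zero hd 1) (by rwa [hs1])
      (fun i hi j hj hij => hyI hi hj (add_right_cancel hij))
      (fun i hi => by simpa using add_natCast_add_natCast_ne_zero (hyI0 i hi) 1)
    convert hasSum_gaussTerm_mul_prod_insert hz hd hv hw using 1
    have hΓ : Complex.Gamma (s + 1) = s * Complex.Gamma s :=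
      Complex.Gamma_add_one s fun hzero => by rw [hzero, Complex.zero_re] at h; exact lt_irrefl _ h
    rw [gaussFactor_insert a b d hz hy fun i hi => by simpa using hyI0 i hi 0, hs1, hs0, hΓ,
      Complex.Gamma_add_one d hd0, add_sub_add_right_eq_sub, add_sub_add_right_eq_sub]
    field_simp
    ring

end GaussProd

section Chains

variable {α R K : Type*}

/-- The value `c i + j` at the `j`-th place of the chain `c i, c i + 1, c i + 2, …`. -/
def chain [AddMonoidWithOne R] (c : α → R) (p : Σ _ : α, ℕ) : R := c p.1 + p.2

variable [Fintype α]

/-- The union over `i` of the first `m i` places of the `i`-th chain. -/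
def segments (m : α → ℕ) : Finset (Σ _ : α, ℕ) := univ.sigma fun i => range (m i)

variable {m x : α → ℕ}

lemma mem_segments {p : Σ _ : α, ℕ} : p ∈ segments m ↔ p.2 < m p.1 := by
  simp [segments]

lemma card_segments (m : α → ℕ) : #(segments m) = ∑ i, m i := by
  simp [segments]

lemma segments_subset_segments : segments x ⊆ segments m ↔ x ≤ m := by
  refine ⟨fun h i => ?_, fun h p hp => mem_segments.2 ((mem_segments.1 hp).trans_le (h p.1))⟩
  by_contra! hlt
  exact (mem_segments.1 (h (mem_segments.2 hlt : (⟨i, m i⟩ : Σ _ : α, ℕ) ∈ _))).false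

lemma segments_injective : Function.Injective (segments : (α → ℕ) → _) := fun _ _ h =>
  le_antisymm (segments_subset_segments.1 h.subset) (segments_subset_segments.1 h.symm.subset)

lemma exists_eq_segments {S : Finset (Σ _ : α, ℕ)}
    (hS : ∀ i j, (⟨i, j + 1⟩ : Σ _ : α, ℕ) ∈ S → (⟨i, j⟩ : Σ _ : α, ℕ) ∈ S) :
    ∃ x, S = segments x := by
  classical
  have hex (i : α) : ∃ j, (⟨i, j⟩ : Σ _ : α, ℕ) ∉ S := by
    simpa using Infinite.exists_notMem_finset (S.preimage (Sigma.mk i) sigma_mk_injective.injOn)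
  refine ⟨fun i => Nat.find (hex i), Finset.ext fun ⟨i, j⟩ => ?_⟩
  rw [mem_segments]
  refine ⟨fun hj => ?_, fun hj => not_not.1 (Nat.find_min (hex i) hj)⟩
  by_contra! hle
  exact Nat.find_spec (hex i) <|
    Nat.decreasingInduction' (P := fun j => (⟨i, j⟩ : Σ _ : α, ℕ) ∈ S)
      (fun k _ _ hk => hS i k hk) hle hj

lemma mem_piFinset_range_add_one [DecidableEq α] :
    x ∈ Fintype.piFinset (fun i => range (m i + 1)) ↔ x ≤ m := by
  simp [Pi.le_def]

lemma gaussFactor_chain [DecidableEq α] [Field K] (a b d : K) (c : α → K) (m : α → ℕ) :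
    gaussFactor a b d (chain c) (segments m) =
      ∑ x ∈ Fintype.piFinset fun i => range (m i + 1),
        subsetWeight a b d (chain c) (segments m) (segments x) := by
  rw [gaussFactor, ← sum_image (g := segments) segments_injective.injOn]
  refine (sum_subset (image_subset_iff.2 fun x hx => ?_) fun S hS hS' => ?_).symm
  · exact mem_powerset.2 (segments_subset_segments.2 (mem_piFinset_range_add_one.1 hx))
  obtain ⟨i, j, hj1, hj⟩ :
      ∃ i j, (⟨i, j + 1⟩ : Σ _ : α, ℕ) ∈ S ∧ (⟨i, j⟩ : Σ _ : α, ℕ) ∉ S := by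
    by_contra! hdown
    obtain ⟨x, rfl⟩ := exists_eq_segments hdown
    exact hS' <| mem_image_of_mem _ <| mem_piFinset_range_add_one.2 <|
      segments_subset_segments.1 (mem_powerset.1 hS)
  have hjm : (⟨i, j⟩ : Σ _ : α, ℕ) ∈ segments m :=
    mem_segments.2 ((Nat.lt_succ_self j).trans (mem_segments.1 (mem_powerset.1 hS hj1)))
  refine subsetWeight_eq_zero a b d hj1 (mem_sdiff.2 ⟨hjm, hj⟩) ?_
  rw [chain, chain, Nat.cast_succ, add_assoc]

lemma prod_segments {M : Type*} [CommMonoid M] (m : α → ℕ) (f : (Σ _ : α, ℕ) → M) :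
    ∏ p ∈ segments m, f p = ∏ i, ∏ j ∈ range (m i), f ⟨i, j⟩ :=
  prod_sigma _ _ _

lemma prod_segments_chain (c : α → ℂ) (m : α → ℕ) :
    ∏ p ∈ segments m, chain c p = ∏ i, poch (c i) (m i) :=
  prod_segments _ _

lemma prod_segments_chain_sub (a : ℂ) (c : α → ℂ) (m : α → ℕ) :
    ∏ p ∈ segments m, (chain c p - a) = ∏ i, poch (c i - a) (m i) := by
  rw [← prod_segments_chain]
  exact prod_congr rfl fun p _ => add_sub_right_comm _ _ _

lemma prod_segments_chain_mul_sub_chain (d : ℂ) (c : α → ℂ) (m : α → ℕ) :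
    ∏ p ∈ segments m, chain c p * (d - 1 - chain c p) =
      (-1) ^ (∑ i, m i) * ∏ i, poch (c i) (m i) * poch (1 + c i - d) (m i) := by
  have hneg (p : Σ _ : α, ℕ) : d - 1 - chain c p = -1 * (chain c p - (d - 1)) := by ring
  have hshift (i : α) : 1 + c i - d = c i - (d - 1) := by ring
  simp only [hneg, hshift, prod_mul_distrib, prod_const, card_segments, prod_segments_chain,
    prod_segments_chain_sub]
  ring

lemma prod_sdiff_segments_chain_mul_sub_chain [DecidableEq α] {d : ℂ} {c : α → ℂ} (hx : x ≤ m)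
    (hc : ∀ i, poch (c i) (x i) ≠ 0) (hcd : ∀ i, poch (1 + c i - d) (x i) ≠ 0) :
    ∏ p ∈ segments m \ segments x, chain c p * (d - 1 - chain c p) =
      (-1) ^ (∑ i, m i) * (∏ i, poch (c i) (m i) * poch (1 + c i - d) (m i)) /
        ((-1) ^ (∑ i, x i) * ∏ i, poch (c i) (x i) * poch (1 + c i - d) (x i)) := by
  have hne : (-1 : ℂ) ^ (∑ i, x i) * ∏ i, poch (c i) (x i) * poch (1 + c i - d) (x i) ≠ 0 :=
    mul_ne_zero (pow_ne_zero _ (neg_ne_zero.2 one_ne_zero)) <|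
      prod_ne_zero_iff.2 fun i _ => mul_ne_zero (hc i) (hcd i)
  rw [eq_div_iff hne, ← prod_segments_chain_mul_sub_chain, ← prod_segments_chain_mul_sub_chain]
  exact prod_sdiff (segments_subset_segments.2 hx)

lemma le_of_poch_ne_zero {u v : ℂ} {n p q : ℕ} (h : poch (1 + v - u) n ≠ 0) (hq : q ≤ n)
    (huv : u + p = v + q) : q ≤ p := by
  by_contra! hpq
  refine prod_ne_zero_iff.1 h (q - p - 1) (mem_range.2 (by omega)) ?_
  rw [Nat.sub_sub, Nat.cast_sub (by omega)]
  push_cast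
  linear_combination -huv

lemma injOn_chain {c : α → ℂ} (hc : Function.Injective c)
    (hcc : ∀ i k, poch (1 + c i - c k) (m i) ≠ 0) :
    Set.InjOn (chain c) (segments fun i => m i + 1) := by
  rintro ⟨i, p⟩ hp ⟨k, q⟩ hq h
  have hp' : p ≤ m i := Nat.lt_succ_iff.1 (mem_segments.1 hp)
  have hq' : q ≤ m k := Nat.lt_succ_iff.1 (mem_segments.1 hq)
  obtain rfl : p = q := le_antisymm (le_of_poch_ne_zero (hcc i k) hp' h.symm)
    (le_of_poch_ne_zero (hcc k i) hq' h)
  obtain rfl : i = k := hc (add_right_cancel h)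
  rfl

lemma prod_Ico_sub_div [Field K] {t : K} {p q : ℕ} (hpq : p ≤ q)
    (h : ∀ l ∈ Icc p q, t - l ≠ 0) :
    ∏ l ∈ Ico p q, (t - l - 1) / (t - l) = (t - q) / (t - p) := by
  induction q, hpq using Nat.le_induction with
  | base => simp [div_self (h p (left_mem_Icc.2 le_rfl))]
  | succ q hpq ih =>
    have hp := h p (left_mem_Icc.2 (hpq.trans q.le_succ))
    have hq := h q (mem_Icc.2 ⟨hpq, q.le_succ⟩)
    rw [prod_Ico_succ_top hpq, ih fun l hl => h l (Icc_subset_Icc_right q.le_succ hl),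
      Nat.cast_succ]
    field_simp
    ring

lemma prod_sdiff_segments_div [DecidableEq α] [Field K] {c : α → K} (hx : x ≤ m) {t : K}
    (ht : ∀ k, ∀ l ∈ Icc (x k) (m k), t ≠ c k + l) :
    ∏ q ∈ segments m \ segments x, (t - chain c q - 1) / (t - chain c q) =
      ∏ k, (t - c k - m k) / (t - c k - x k) := by
  have hsdiff : segments m \ segments x = univ.sigma fun k => Ico (x k) (m k) := by
    ext ⟨k, l⟩
    simp [mem_segments, and_comm]
  rw [hsdiff, prod_sigma]
  refine prod_congr rfl fun k _ => ?_
  simp only [chain, ← sub_sub]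
  exact prod_Ico_sub_div (hx k) fun l hl => by
    rw [sub_sub]
    exact sub_ne_zero.2 (ht k l hl)

lemma prod_segments_prod_sdiff_div [DecidableEq α] {c : α → ℂ} (hx : x ≤ m)
    (hinj : Set.InjOn (chain c) (segments fun i => m i + 1)) :
    ∏ p ∈ segments x, ∏ q ∈ segments m \ segments x,
        (chain c p - chain c q - 1) / (chain c p - chain c q) =
      ∏ i, ∏ k, poch (c i - c k - m k) (x i) / poch (c i - c k - x k) (x i) := by
  rw [prod_segments]
  refine prod_congr rfl fun i _ => ?_
  simp only [poch, ← prod_div_distrib]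
  refine (prod_congr rfl fun j hj => ?_).trans Finset.prod_comm
  have hne : ∀ k, ∀ l ∈ Icc (x k) (m k), chain c ⟨i, j⟩ ≠ c k + l := by
    intro k l hl heq
    obtain ⟨hxl, hlm⟩ := mem_Icc.1 hl
    have hjx : j < x i := mem_range.1 hj
    have hij : (⟨i, j⟩ : Σ _ : α, ℕ) ∈ segments fun i => m i + 1 :=
      mem_segments.2 (hjx.trans_le ((hx i).trans (Nat.le_succ _)))
    have hkl : (⟨k, l⟩ : Σ _ : α, ℕ) ∈ segments fun i => m i + 1 :=
      mem_segments.2 (Nat.lt_succ_of_le hlm)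
    cases hinj hij hkl heq
    exact hjx.not_ge hxl
  rw [prod_sdiff_segments_div hx hne]
  simp only [chain]
  exact prod_congr rfl fun k _ => by ring

section Order

variable [LinearOrder α] [LocallyFiniteOrderTop α] [LocallyFiniteOrderBot α] {c : α → ℂ}

lemma prod_prod_eq_diag_mul {M : Type*} [CommMonoid M] (F : α → α → M) :
    ∏ i, ∏ k, F i k = (∏ i, F i i) * ∏ i, ∏ j ∈ Ioi i, F j i * F i j := by
  rw [prod_prod_Ioi_mul_eq_prod_prod_off_diag, Finset.prod_comm, ← prod_mul_distrib]
  exact prod_congr rfl fun i _ => Fintype.prod_eq_mul_prod_compl i fun k => F k i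

lemma prod_prod_poch_sub (hc : Function.Injective c) (x : α → ℕ) :
    (∏ i, ∏ k, poch (c i - c k - x k) (x i)) *
        (∏ i, ∏ j ∈ Ioi i, (c i + x i - c j - x j) / (c i - c j)) =
      (-1) ^ (∑ i, x i) * ∏ i, ∏ k, poch (1 + c i - c k) (x i) := by
  have hdiag : ∏ i, poch (c i - c i - x i) (x i) =
      (-1) ^ (∑ i, x i) * ∏ i, poch (1 + c i - c i) (x i) := by
    rw [← prod_pow_eq_pow_sum, ← prod_mul_distrib]
    refine prod_congr rfl fun i _ => ?_
    rw [poch_reflect]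
    ring_nf
  have hoff : (∏ i, ∏ j ∈ Ioi i, poch (c j - c i - x i) (x j) * poch (c i - c j - x j) (x i)) *
        (∏ i, ∏ j ∈ Ioi i, (c i + x i - c j - x j) / (c i - c j)) =
      ∏ i, ∏ j ∈ Ioi i, poch (1 + c j - c i) (x j) * poch (1 + c i - c j) (x i) := by
    simp only [← prod_mul_distrib]
    refine prod_congr rfl fun i _ => prod_congr rfl fun j hj => ?_
    have hij : c i - c j ≠ 0 := sub_ne_zero.2 (hc.ne (mem_Ioi.1 hj).ne)
    have h := poch_sub_mul_poch_sub (c i - c j) (x i) (x j)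
    rw [neg_sub, ← add_sub_assoc, ← sub_add, ← add_sub_right_comm 1] at h
    rw [mul_div_assoc', div_eq_iff hij]
    linear_combination h
  rw [prod_prod_eq_diag_mul, prod_prod_eq_diag_mul, mul_assoc, hoff, hdiag, mul_assoc]

lemma prod_prod_poch_sub_div (hc : Function.Injective c)
    (hcc : ∀ i k, poch (1 + c i - c k) (x i) ≠ 0) (F : α → α → ℂ) :
    ∏ i, ∏ k, F i k / poch (c i - c k - x k) (x i) =
      (-1) ^ (∑ i, x i) * (∏ i, ∏ j ∈ Ioi i, (c i + x i - c j - x j) / (c i - c j)) *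
        ∏ i, ∏ k, F i k / poch (1 + c i - c k) (x i) := by
  have hΔ := prod_prod_poch_sub hc x
  have hsign : ((-1 : ℂ) ^ (∑ i, x i)) * (-1) ^ (∑ i, x i) = 1 := by
    rw [← mul_pow, neg_one_mul, neg_neg, one_pow]
  have hnum : ∏ i, ∏ k, poch (1 + c i - c k) (x i) ≠ 0 :=
    prod_ne_zero_iff.2 fun i _ => prod_ne_zero_iff.2 fun k _ => hcc i k
  have hden : ∏ i, ∏ k, poch (c i - c k - x k) (x i) ≠ 0 :=
    left_ne_zero_of_mul <| hΔ ▸ mul_ne_zero (left_ne_zero_of_mul_eq_one hsign) hnum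
  generalize ∏ i, ∏ j ∈ Ioi i, (c i + x i - c j - x j) / (c i - c j) = Δ at hΔ ⊢
  simp only [prod_div_distrib]
  rw [← mul_div_assoc, div_eq_div_iff hden hnum]
  linear_combination -(-1) ^ (∑ i, x i) * (∏ i, ∏ k, F i k) * hΔ -
    (∏ i, ∏ k, F i k) * (∏ i, ∏ k, poch (1 + c i - c k) (x i)) * hsign

lemma subsetWeight_chain_segments (a b : ℂ) {d : ℂ} (hx : x ≤ m) (hc : Function.Injective c)
    (hc0 : ∀ i, poch (c i) (x i) ≠ 0) (hcd : ∀ i, poch (1 + c i - d) (x i) ≠ 0)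
    (hcc : ∀ i k, poch (1 + c i - c k) (m i) ≠ 0) :
    subsetWeight a b d (chain c) (segments m) (segments x) =
      (-1) ^ (∑ i, m i) * (∏ i, poch (c i) (m i)) * (∏ i, poch (1 + c i - d) (m i)) *
        ((∏ i, ∏ j ∈ Ioi i, (c i + x i - c j - x j) / (c i - c j)) *
          (∏ i, poch (c i - a) (x i) * poch (c i - b) (x i) /
            (poch (c i) (x i) * poch (1 + c i - d) (x i))) *
          ∏ i, ∏ k, poch (c i - c k - m k) (x i) / poch (1 + c i - c k) (x i)) := by
  have hccx : ∀ i k, poch (1 + c i - c k) (x i) ≠ 0 := fun i k =>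
    poch_ne_zero_of_le (hx i) (hcc i k)
  rw [subsetWeight, prod_sdiff_segments_chain_mul_sub_chain hx hc0 hcd,
    prod_segments_prod_sdiff_div hx (injOn_chain hc hcc), prod_prod_poch_sub_div hc hccx,
    prod_mul_distrib, prod_segments_chain_sub, prod_segments_chain_sub]
  have hsign : (-1 : ℂ) ^ (∑ i, x i) ≠ 0 := pow_ne_zero _ (neg_ne_zero.2 one_ne_zero)
  have hden : ∏ i, poch (c i) (x i) * poch (1 + c i - d) (x i) ≠ 0 :=
    prod_ne_zero_iff.2 fun i _ => mul_ne_zero (hc0 i) (hcd i)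
  rw [prod_div_distrib (s := univ) (f := fun i => poch (c i - a) (x i) * _),
    prod_mul_distrib (f := fun i => poch (c i - a) (x i)),
    prod_mul_distrib (f := fun i => poch (c i) (m i))]
  field_simp

end Order

lemma poch_mul_prod_div_eq_gaussTerm (a b d : ℂ) {c : α → ℂ} (hc : ∀ i, ∀ k : ℕ, c i + k ≠ 0)
    (m : α → ℕ) (k : ℕ) :
    poch a k * poch b k * (∏ i, poch (c i + m i) k) /
        ((k.factorial : ℂ) * poch d k * ∏ i, poch (c i) k) =
      gaussTerm a b d k * (∏ p ∈ segments m, (chain c p + k)) / ∏ i, poch (c i) (m i) := by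
  have hshift : ∏ p ∈ segments m, (chain c p + k) = ∏ i, poch (c i + k) (m i) := by
    rw [← prod_segments_chain]
    exact prod_congr rfl fun p _ => add_right_comm _ _ _
  rw [hshift, mul_div_mul_comm, mul_div_assoc (gaussTerm a b d k), ← prod_div_distrib,
    ← prod_div_distrib, gaussTerm]
  simp only [poch_add_natCast_div_poch (hc _)]
end Chains

theorem stmt18 (r : ℕ) (a b d : ℂ) (c : Fin r → ℂ) (m : Fin r → ℕ)
    (hconv : 0 < (d - a - b - (∑ i, m i : ℕ)).re)
    (hd : ∀ k : ℕ, d + k ≠ 0)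
    (hc : ∀ i, ∀ k : ℕ, c i + k ≠ 0)
    (hcc : ∀ i j : Fin r, i ≠ j → c i ≠ c j)
    (hda : ∀ k : ℕ, d - a + k ≠ 0) (hdb : ∀ k : ℕ, d - b + k ≠ 0)
    (hcd : ∀ i, poch (1 + c i - d) (m i) ≠ 0)
    (hcck : ∀ i k : Fin r, poch (1 + c i - c k) (m i) ≠ 0) :
    (∑' k : ℕ, poch a k * poch b k * (∏ i, poch (c i + m i) k) /
        ((k.factorial : ℂ) * poch d k * ∏ i, poch (c i) k)) =
      (-1) ^ (∑ i, m i) *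
        (Complex.Gamma d * Complex.Gamma (d - a - b - (∑ i, m i : ℕ)) /
          (Complex.Gamma (d - a) * Complex.Gamma (d - b))) *
        (∏ i, poch (1 + c i - d) (m i)) *
        ∑ x ∈ Fintype.piFinset (fun i => Finset.range (m i + 1)),
          (∏ i : Fin r, ∏ j ∈ Finset.univ.filter (fun j => i < j),
              (c i + x i - c j - x j) / (c i - c j)) *
            (∏ i : Fin r, poch (c i - a) (x i) * poch (c i - b) (x i) /
              (poch (c i) (x i) * poch (1 + c i - d) (x i))) *
            ∏ i : Fin r, ∏ k : Fin r,
              poch (c i - c k - m k) (x i) / poch (1 + c i - c k) (x i) := by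
  have hinj : Function.Injective c := fun i j h => by_contra fun hij => hcc i j hij h
  have hpoch : ∏ i, poch (c i) (m i) ≠ 0 := prod_ne_zero_iff.2 fun i _ => poch_ne_zero (hc i) _
  have hsum := hasSum_gaussTerm_mul_prod (a := a) (b := b) (y := chain c) (I := segments m) hd
    (by rwa [card_segments])
    ((injOn_chain hinj hcck).mono <|
      coe_subset.2 <| segments_subset_segments.2 fun i => Nat.le_succ _)
    fun p _ => add_natCast_add_natCast_ne_zero (hc p.1) p.2
  have hweight (x) (hx : x ∈ Fintype.piFinset fun i => range (m i + 1)) :=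
    have hxm := mem_piFinset_range_add_one.1 hx
    subsetWeight_chain_segments a b hxm hinj (fun i => poch_ne_zero (hc i) _)
      (fun i => poch_ne_zero_of_le (hxm i) (hcd i)) hcck
  rw [tsum_congr (poch_mul_prod_div_eq_gaussTerm a b d hc m), (hsum.div_const _).tsum_eq,
    card_segments, gaussFactor_chain, sum_congr rfl hweight, ← mul_sum, div_eq_iff hpoch]
  simp only [filter_lt_eq_Ioi]
  ring
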